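/- Let Δ̃ := Δ_P \ {α_k} for some 1 ≤ k ≤ r. Then: (a) the minimal-length representative ω_Pω_{Δ̃} of the longest coset equals u_k^{(r)}u_k^{(r−1)}⋯u_k^{(k)} and gr(ω_Pω_{Δ̃}) = Σ_{p=k}^r k·e_p; (b) for every v ∈ W_{Δ_P}^{Δ̃}, writing gr(v) = Σ_{p=1}^{r+1} j_p e_p, one has j_p = 0 for p < k and for p = r+1, and k ≥ j_k ≥ j_{k+1} ≥ ⋯ ≥ j_r ≥ 0. -/

import Mathlib

/-!
In type `A`, the minimal representatives of `W_{Δ_m}` modulo `W_{Δ_{m-1}}` are exactly the elements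
`s_j ⋯ s_m`, so they are determined by their lengths. Let `v = v_r ⋯ v_1` be minimal modulo
`W_{Δ̃}`; then `ℓ(v) = ℓ(v_r) + ⋯ + ℓ(v_1)`, and each `v_m ⋯ v_1` is again minimal modulo `W_{Δ̃}`.

* The product `v_{k-1} ⋯ v_1` lies in `W_{Δ̃}`, so it is trivial.
* If `ℓ(v_{m+1}) > ℓ(v_m)` for some `m ≥ k`, then `v_{m+1} v_m = (s_a ⋯ s_{m+1})(s_b ⋯ s_m)` with
  `a ≤ b`, which equals `(s_{b+1} ⋯ s_{m+1})(s_a ⋯ s_{m+1})`. As `s_{m+1}` commutes with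
  `v_{m-1} ⋯ v_1`, the element `v_{m+1} ⋯ v_1 s_{m+1}` is shorter than `v_{m+1} ⋯ v_1`, although
  `s_{m+1} ∈ W_{Δ̃}`.

This is part (b), and it bounds `ℓ(v)` by `k (r - k + 1)`. The element `u_k^{(r)} ⋯ u_k^{(k)}`
attains this bound, and it is minimal modulo `W_{Δ̃}` because it maps `α_t` to `α_{t+r-k+1}` for
`t < k` and to `α_{t-k}` for `k < t ≤ r`. The only minimal representative of maximal length is
`ω_P ω_{Δ̃}`, which gives part (a), the factors of a decomposition being unique.
-/

open scoped BigOperators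

/-- A reduced crystallographic root system with a fixed base `α_1, …, α_n` of simple
roots, bundled with its Weyl group `W`.  A root `γ` is recorded by its integer
coordinate vector in the basis of simple roots (so the `i`-th simple root is
`Pi.single i 1`), and `cor γ` is the coordinate vector of the coroot `γ^∨` in the
basis of simple coroots (hence `cor γ i = ⟨χ_i, γ^∨⟩` for the fundamental weights
`χ_i`).  `A i j = ⟨α_i, α_j^∨⟩` is the Cartan matrix, `σ γ` is the reflection `s_γ`
and `act` is the action of the Weyl group on the root lattice. -/
structure RootSystemData (n : ℕ) where
  A : Fin n → Fin n → ℤ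
  R : Finset (Fin n → ℤ)
  cor : (Fin n → ℤ) → (Fin n → ℤ)
  W : Type
  [grp : Group W]
  σ : (Fin n → ℤ) → W
  act : W → (Fin n → ℤ) → (Fin n → ℤ)
  simple_mem : ∀ i : Fin n, (Pi.single i 1 : Fin n → ℤ) ∈ R
  root_ne_zero : ∀ γ ∈ R, γ ≠ 0
  neg_mem : ∀ γ ∈ R, -γ ∈ R
  pos_or_neg : ∀ γ ∈ R, (∀ i, 0 ≤ γ i) ∨ (∀ i, γ i ≤ 0)
  reduced : ∀ γ ∈ R, ∀ k : ℤ, k • γ ∈ R → k = 1 ∨ k = -1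
  cor_simple : ∀ i : Fin n, cor (Pi.single i 1) = Pi.single i 1
  cor_neg : ∀ γ ∈ R, cor (-γ) = -(cor γ)
  pair_self : ∀ γ ∈ R, (∑ i, ∑ j, γ i * A i j * cor γ j) = 2
  act_one : ∀ x, act 1 x = x
  act_mul : ∀ w w' x, act (w * w') x = act w (act w' x)
  act_refl : ∀ γ ∈ R, ∀ x, act (σ γ) x = x - (∑ i, ∑ j, x i * A i j * cor γ j) • γ
  act_mem : ∀ (w : W), ∀ γ ∈ R, act w γ ∈ R
  cor_refl : ∀ γ ∈ R, ∀ β ∈ R,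
    cor (act (σ γ) β) = cor β - (∑ i, ∑ j, γ i * A i j * cor β j) • cor γ
  refl_sq : ∀ γ ∈ R, σ γ * σ γ = 1
  refl_act : ∀ (w : W), ∀ γ ∈ R, σ (act w γ) = w * σ γ * w⁻¹
  act_faithful : ∀ w w' : W, (∀ γ ∈ R, act w γ = act w' γ) → w = w'
  generated : ∀ w : W, ∃ l : List (Fin n), w = (l.map fun i => σ (Pi.single i 1)).prod

namespace RootSystemData

instance {n : ℕ} (c : RootSystemData n) : Group c.W := c.grp

/-- the pairing `⟨x, λ⟩` between an element `x` of the root lattice (coordinates in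
the basis of simple roots) and an element `λ` of the coroot lattice (coordinates in
the basis of simple coroots) -/
def pair {n : ℕ} (c : RootSystemData n) (x lam : Fin n → ℤ) : ℤ :=
  ∑ i, ∑ j, x i * c.A i j * lam j

/-- the `i`-th simple root -/
def sroot {n : ℕ} (_c : RootSystemData n) (i : Fin n) : Fin n → ℤ := Pi.single i 1

/-- the simple reflection `s_i` -/
def s {n : ℕ} (c : RootSystemData n) (i : Fin n) : c.W := c.σ (c.sroot i)

/-- `s_{α_{t+1}}` for a `0`-based natural number index `t` (`= 1` when out of range) -/
def sN {n : ℕ} (c : RootSystemData n) (t : ℕ) : c.W := if h : t < n then c.s ⟨t, h⟩ else 1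

/-- `⟨2ρ, λ⟩ = Σ_{β ∈ R^+} ⟨β, λ⟩`, where `ρ` is the half-sum of the positive roots -/
def pairTwoRho {n : ℕ} (c : RootSystemData n) (lam : Fin n → ℤ) : ℤ :=
  ∑ β ∈ c.R, if ∀ i, 0 ≤ β i then c.pair β lam else 0

/-- the length of `w ∈ W` with respect to the simple reflections -/
noncomputable def len {n : ℕ} (c : RootSystemData n) (w : c.W) : ℕ :=
  sInf {k | ∃ l : List (Fin n), l.length = k ∧ (l.map c.s).prod = w}

/-- the parabolic subgroup `W_S` generated by the simple reflections indexed by `S` -/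
def Wsub {n : ℕ} (c : RootSystemData n) (S : Finset (Fin n)) : Subgroup c.W :=
  Subgroup.closure (c.s '' ↑S)

/-- `w ∈ W_T^S`: `w ∈ W_T` and `w` has minimal length in the coset `w W_S` -/
def MinRep {n : ℕ} (c : RootSystemData n) (T S : Finset (Fin n)) (w : c.W) : Prop :=
  w ∈ c.Wsub T ∧ ∀ u ∈ c.Wsub S, c.len w ≤ c.len (w * u)

/-- `w` is the longest element of `W_S` -/
def IsLongest {n : ℕ} (c : RootSystemData n) (S : Finset (Fin n)) (w : c.W) : Prop :=
  w ∈ c.Wsub S ∧ ∀ v ∈ c.Wsub S, c.len v ≤ c.len w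

end RootSystemData

/-- the support of `γ` is contained in `S`, i.e. `γ` lies in the span of
`{α_i : i ∈ S}` (for a root `γ`, membership in `R_S`) -/
def suppIn {n : ℕ} (S : Finset (Fin n)) (γ : Fin n → ℤ) : Prop :=
  ∀ i, i ∉ S → γ i = 0

/-- `Δ_j` for `0 ≤ j ≤ r+1`: the index set of the first `j` simple roots for `j ≤ r`,
and all of `Δ` for `j = r+1`.  (Indices of simple roots are `0`-based, so
`α_1, …, α_j` correspond to the indices `0, …, j-1`.) -/
def deltaSet (n r j : ℕ) : Finset (Fin n) :=
  if j = r + 1 then Finset.univ else Finset.univ.filter fun i => (i : ℕ) < j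

namespace RootSystemData

/-- `v 0, …, v r` (standing for `v_1, …, v_{r+1}`) is the decomposition of `w`
associated to `(Δ_P, Υ)`:  each `v_i ∈ W_{Δ_i}^{Δ_{i-1}}` and `w = v_{r+1} v_r ⋯ v_1`. -/
def IsDecomp {n : ℕ} (c : RootSystemData n) (r : ℕ) (w : c.W)
    (v : Fin (r + 1) → c.W) : Prop :=
  (∀ k : Fin (r + 1), c.MinRep (deltaSet n r ((k : ℕ) + 1)) (deltaSet n r (k : ℕ)) (v k)) ∧
    w = (List.ofFn v).reverse.prod

/-- the first `m` simple roots `α_1, …, α_m` form a path of type `A_m`: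
`⟨α_i, α_j^∨⟩ = -1` if `|i-j| = 1` and `⟨α_i, α_j^∨⟩ = 0` if `|i-j| ≥ 2`. -/
def PathA {n : ℕ} (c : RootSystemData n) (m : ℕ) : Prop :=
  ∀ i j : Fin n, (i : ℕ) < m → (j : ℕ) < m →
    (((i : ℕ) + 1 = (j : ℕ) ∨ (j : ℕ) + 1 = (i : ℕ)) → c.A i j = -1) ∧
    ((i : ℕ) + 2 ≤ (j : ℕ) ∨ (j : ℕ) + 2 ≤ (i : ℕ) → c.A i j = 0)

/-- `u_{[k,m]} = s_k s_{k+1} ⋯ s_m` (`1`-based indices; `u_{[k,m]} = 1` for `k > m`) -/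
def uu {n : ℕ} (c : RootSystemData n) (k m : ℕ) : c.W :=
  ((List.range' k (m + 1 - k)).map fun t => c.sN (t - 1)).prod

/-- `u_i^{(m)} = s_{m-i+1} s_{m-i+2} ⋯ s_m` -/
def uElt {n : ℕ} (c : RootSystemData n) (i m : ℕ) : c.W := c.uu (m - i + 1) m

end RootSystemData

/-- strict lexicographic order on `Fin m → ℤ` -/
def lexLT {m : ℕ} (x y : Fin m → ℤ) : Prop :=
  ∃ j, x j < y j ∧ ∀ k, k < j → x k = y k

/-- lexicographic order on `Fin m → ℤ` -/
def lexLE {m : ℕ} (x y : Fin m → ℤ) : Prop := x = y ∨ lexLT x y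

/-- the grading `gr(q_{α_{j+1}^∨}) ∈ ℤ^{r+1}` (for the `0`-based index `j < r`), when
`Δ_P` is of type `A_r`: in `1`-based terms, `gr(q_{α_1^∨}) = 2·e_1` and
`gr(q_{α_j^∨}) = (1-j)·e_{j-1} + (1+j)·e_j` for `2 ≤ j ≤ r`. -/
def grQ (r j : ℕ) : Fin (r + 1) → ℤ := fun k =>
  (if (k : ℕ) = j then (j : ℤ) + 2 else 0) + (if (k : ℕ) + 1 = j then -(j : ℤ) else 0)

/-- the grading `gr(q_λ)` for `λ ∈ Q_P^∨` (coordinates in simple coroots), extended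
additively from the `gr(q_{α_j^∨})`, when `Δ_P` is of type `A_r` -/
def grQlam (n r : ℕ) (lam : Fin n → ℤ) : Fin (r + 1) → ℤ :=
  fun k => ∑ j, lam j * grQ r (j : ℕ) k

namespace RootSystemData

section LengthFunction

variable {n : ℕ} (c : RootSystemData n)

/-! ### The action on the root lattice -/

theorem sroot_mem (i : Fin n) : c.sroot i ∈ c.R := c.simple_mem i

theorem sroot_nonneg (i : Fin n) : 0 ≤ c.sroot i := Pi.single_nonneg.mpr zero_le_one

theorem nonneg_or_nonpos {γ : Fin n → ℤ} (hγ : γ ∈ c.R) : 0 ≤ γ ∨ γ ≤ 0 := c.pos_or_neg γ hγ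

theorem act_sroot_nonneg_or_nonpos (w : c.W) (i : Fin n) :
    0 ≤ c.act w (c.sroot i) ∨ c.act w (c.sroot i) ≤ 0 :=
  c.nonneg_or_nonpos (c.act_mem w _ (c.sroot_mem i))

theorem cartan_self (i : Fin n) : c.A i i = 2 := by
  simpa [c.cor_simple, Pi.single_apply] using c.pair_self _ (c.simple_mem i)

theorem act_s (i : Fin n) (x : Fin n → ℤ) :
    c.act (c.s i) x = x - (∑ a, x a * c.A a i) • c.sroot i := by
  simpa [s, sroot, c.cor_simple, Pi.single_apply] using c.act_refl _ (c.simple_mem i) x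

theorem act_s_apply_of_ne {i j : Fin n} (h : j ≠ i) (x : Fin n → ℤ) :
    c.act (c.s i) x j = x j := by
  simp [act_s, sroot, h]

theorem act_s_sroot (i j : Fin n) :
    c.act (c.s i) (c.sroot j) = c.sroot j - c.A j i • c.sroot i := by
  rw [act_s]
  simp [sroot, Pi.single_apply]

theorem act_s_sroot_self (i : Fin n) : c.act (c.s i) (c.sroot i) = -c.sroot i := by
  rw [act_s_sroot, cartan_self, two_smul]
  abel

theorem exists_word (w : c.W) : ∃ l : List (Fin n), (l.map c.s).prod = w :=
  (c.generated w).imp fun _ h => h.symm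

theorem act_add (w : c.W) (x y : Fin n → ℤ) : c.act w (x + y) = c.act w x + c.act w y := by
  obtain ⟨l, rfl⟩ := c.exists_word w
  induction l with
  | nil => simp only [List.map_nil, List.prod_nil, c.act_one]
  | cons i l ih =>
    simp only [List.map_cons, List.prod_cons, c.act_mul, ih, act_s, Pi.add_apply, add_mul,
      Finset.sum_add_distrib, add_smul]
    abel

/-- The action of `w ∈ W` on the root lattice as an additive map, giving access to the
`map_*` lemmas. -/
def actHom (w : c.W) : (Fin n → ℤ) →+ (Fin n → ℤ) := AddMonoidHom.mk' (c.act w) (c.act_add w)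

theorem act_neg (w : c.W) (x : Fin n → ℤ) : c.act w (-x) = -c.act w x := map_neg (c.actHom w) x

theorem act_eq_sum (w : c.W) (x : Fin n → ℤ) :
    c.act w x = ∑ i, x i • c.act w (c.sroot i) := by
  have hx : x = ∑ i, x i • c.sroot i := by
    ext j
    simp [sroot, Pi.single_apply]
  calc c.act w x = c.actHom w (∑ i, x i • c.sroot i) := by rw [← hx]; rfl
    _ = ∑ i, x i • c.act w (c.sroot i) := by simp only [map_sum, map_zsmul]; rfl

variable {c} in
theorem mul_s_eq_s_mul_of_act_sroot {w : c.W} {i j : Fin n}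
    (h : c.act w (c.sroot i) = c.sroot j) : w * c.s i = c.s j * w := by
  have hconj : c.σ (c.act w (c.sroot i)) = w * c.s i * w⁻¹ := c.refl_act w _ (c.simple_mem i)
  rw [s, s, ← h, hconj, inv_mul_cancel_right, s]

theorem s_mul_s (i : Fin n) : c.s i * c.s i = 1 := c.refl_sq _ (c.simple_mem i)

theorem s_inv (i : Fin n) : (c.s i)⁻¹ = c.s i := inv_eq_of_mul_eq_one_left (c.s_mul_s i)

/-! ### Exchange condition and length -/

variable {c} in
theorem eq_sroot_of_act_s_nonpos {β : Fin n → ℤ} {i : Fin n} (hβ : β ∈ c.R) (hpos : 0 ≤ β)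
    (hneg : c.act (c.s i) β ≤ 0) : β = c.sroot i := by
  have hβi : β = β i • c.sroot i := by
    ext j
    by_cases hj : j = i
    · subst hj
      simp [sroot]
    · have hβj : β j ≤ 0 := (c.act_s_apply_of_ne hj β).symm.trans_le (hneg j)
      simpa [sroot, hj] using le_antisymm hβj (hpos j)
  rcases c.reduced _ (c.simple_mem i) (β i) (hβi ▸ hβ) with h | h
  · rw [hβi, h, one_smul]
  · exact absurd (hpos i) (by simp [h])

variable {c} in
theorem exists_shorter_word {i : Fin n} {l : List (Fin n)}
    (h : c.act (l.map c.s).prod (c.sroot i) ≤ 0) :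
    ∃ l' : List (Fin n), l'.length + 1 = l.length ∧
      (l'.map c.s).prod = (l.map c.s).prod * c.s i := by
  induction l with
  | nil =>
    simp only [List.map_nil, List.prod_nil, c.act_one] at h
    exact absurd (le_antisymm h (c.sroot_nonneg i)) (c.root_ne_zero _ (c.sroot_mem i))
  | cons j l ih =>
    simp only [List.map_cons, List.prod_cons] at h ⊢
    rcases c.act_sroot_nonneg_or_nonpos (l.map c.s).prod i with hpos | hneg
    · rw [c.act_mul] at h
      have hroot := eq_sroot_of_act_s_nonpos (c.act_mem _ _ (c.sroot_mem i)) hpos h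
      refine ⟨l, rfl, ?_⟩
      rw [mul_assoc, mul_s_eq_s_mul_of_act_sroot hroot, ← mul_assoc, s_mul_s, one_mul]
    · obtain ⟨l', hlen, hprod⟩ := ih hneg
      exact ⟨j :: l', by simp [hlen], by simp [hprod, mul_assoc]⟩

theorem len_prod_le (l : List (Fin n)) : c.len (l.map c.s).prod ≤ l.length :=
  Nat.sInf_le ⟨l, rfl, rfl⟩

theorem exists_reduced_word (w : c.W) :
    ∃ l : List (Fin n), l.length = c.len w ∧ (l.map c.s).prod = w := by
  obtain ⟨l, h⟩ := c.exists_word w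
  exact Nat.sInf_mem (s := {k | ∃ l : List (Fin n), l.length = k ∧ (l.map c.s).prod = w})
    ⟨l.length, l, rfl, h⟩

@[simp]
theorem len_one : c.len 1 = 0 := by simpa using c.len_prod_le []

variable {c} in
theorem len_eq_zero {w : c.W} : c.len w = 0 ↔ w = 1 := by
  refine ⟨fun h => ?_, fun h => h ▸ c.len_one⟩
  obtain ⟨l, hlen, rfl⟩ := c.exists_reduced_word w
  rw [h, List.length_eq_zero_iff] at hlen
  simp [hlen]

theorem len_s_le_one (i : Fin n) : c.len (c.s i) ≤ 1 := by simpa using c.len_prod_le [i]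

theorem len_mul_le (w w' : c.W) : c.len (w * w') ≤ c.len w + c.len w' := by
  obtain ⟨l, hl, hw⟩ := c.exists_reduced_word w
  obtain ⟨l', hl', hw'⟩ := c.exists_reduced_word w'
  simpa [hl, hl', hw, hw'] using c.len_prod_le (l ++ l')

variable {c} in
theorem len_mul_s_add_one_of_nonpos {w : c.W} {i : Fin n} (h : c.act w (c.sroot i) ≤ 0) :
    c.len (w * c.s i) + 1 = c.len w := by
  apply le_antisymm
  · obtain ⟨l, hlen, rfl⟩ := c.exists_reduced_word w
    obtain ⟨l', hlen', hprod⟩ := exists_shorter_word h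
    rw [← hprod, ← hlen, ← hlen']
    exact Nat.succ_le_succ (c.len_prod_le l')
  · calc c.len w = c.len (w * c.s i * c.s i) := by rw [mul_assoc, s_mul_s, mul_one]
      _ ≤ c.len (w * c.s i) + c.len (c.s i) := c.len_mul_le _ _
      _ ≤ c.len (w * c.s i) + 1 := Nat.add_le_add_left (c.len_s_le_one i) _

variable {c} in
theorem len_mul_s_of_nonneg {w : c.W} {i : Fin n} (h : 0 ≤ c.act w (c.sroot i)) :
    c.len (w * c.s i) = c.len w + 1 := by
  have hneg : c.act (w * c.s i) (c.sroot i) ≤ 0 := by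
    rw [c.act_mul, act_s_sroot_self, act_neg]
    exact neg_nonpos.mpr h
  rw [← len_mul_s_add_one_of_nonpos hneg, mul_assoc, s_mul_s, mul_one]

end LengthFunction

section Parabolic

variable {n : ℕ} {c : RootSystemData n} {S T : Finset (Fin n)}

/-! ### Parabolic subgroups and minimal coset representatives -/

theorem s_mem_wsub {i : Fin n} (hi : i ∈ S) : c.s i ∈ c.Wsub S :=
  Subgroup.subset_closure ⟨i, hi, rfl⟩

theorem wsub_mono (h : S ⊆ T) : c.Wsub S ≤ c.Wsub T :=
  Subgroup.closure_mono (Set.image_mono (Finset.coe_subset.mpr h))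

theorem wsub_empty : c.Wsub ∅ = ⊥ := by simp [Wsub]

theorem wsub_induction_left {p : c.W → Prop} (one : p 1)
    (s_mul : ∀ i ∈ S, ∀ w, p w → p (c.s i * w)) {w : c.W} (hw : w ∈ c.Wsub S) : p w := by
  induction hw using Subgroup.closure_induction_left with
  | one => exact one
  | mul_left _ hx w _ ih =>
    obtain ⟨i, hi, rfl⟩ := hx
    exact s_mul i hi w ih
  | inv_mul_cancel _ hx w _ ih =>
    obtain ⟨i, hi, rfl⟩ := hx
    exact (c.s_inv i).symm ▸ s_mul i hi w ih

theorem wsub_induction_right {p : c.W → Prop} (one : p 1)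
    (mul_s : ∀ w ∈ c.Wsub S, ∀ i ∈ S, p w → p (w * c.s i)) {w : c.W} (hw : w ∈ c.Wsub S) :
    p w := by
  induction hw using Subgroup.closure_induction_right with
  | one => exact one
  | mul_right w hw _ hx ih =>
    obtain ⟨i, hi, rfl⟩ := hx
    exact mul_s w hw i hi ih
  | mul_inv_cancel w hw _ hx ih =>
    obtain ⟨i, hi, rfl⟩ := hx
    exact (c.s_inv i).symm ▸ mul_s w hw i hi ih

theorem act_apply_of_notMem {w : c.W} (hw : w ∈ c.Wsub S) {i : Fin n} (hi : i ∉ S)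
    (x : Fin n → ℤ) : c.act w x i = x i := by
  refine wsub_induction_left (p := fun w => c.act w x i = x i) (by rw [c.act_one]) ?_ hw
  intro j hj w hwi
  rw [c.act_mul, c.act_s_apply_of_ne (ne_of_mem_of_not_mem hj hi).symm, hwi]

theorem act_sroot_nonneg_of_notMem {w : c.W} (hw : w ∈ c.Wsub S) {i : Fin n} (hi : i ∉ S) :
    0 ≤ c.act w (c.sroot i) := by
  refine (c.act_sroot_nonneg_or_nonpos w i).resolve_right fun h => ?_
  have hcoord : c.sroot i i ≤ 0 := (act_apply_of_notMem hw hi _).symm.trans_le (h i)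
  simp [sroot] at hcoord

theorem act_sroot_eq_self {w : c.W} (hw : w ∈ c.Wsub S) {i : Fin n}
    (h : ∀ j ∈ S, c.A i j = 0) : c.act w (c.sroot i) = c.sroot i := by
  refine wsub_induction_left (p := fun w => c.act w (c.sroot i) = c.sroot i) (c.act_one _) ?_ hw
  intro j hj w hwi
  rw [c.act_mul, hwi, act_s_sroot, h j hj, zero_smul, sub_zero]

theorem suppIn_act_sroot {w : c.W} (hw : w ∈ c.Wsub S) {i : Fin n} (hi : i ∈ S) :
    suppIn S (c.act w (c.sroot i)) := by
  intro j hj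
  rw [act_apply_of_notMem hw hj]
  simp [sroot, (ne_of_mem_of_not_mem hi hj).symm]

theorem act_nonneg {x : c.W} (hx : ∀ i ∈ S, 0 ≤ c.act x (c.sroot i)) {γ : Fin n → ℤ}
    (hγ : suppIn S γ) (hpos : 0 ≤ γ) : 0 ≤ c.act x γ := by
  rw [c.act_eq_sum]
  refine Finset.sum_nonneg fun i _ => ?_
  by_cases hi : i ∈ S
  · exact smul_nonneg (hpos i) (hx i hi)
  · rw [hγ i hi, zero_smul]

theorem act_nonpos {x : c.W} (hx : ∀ i ∈ S, c.act x (c.sroot i) ≤ 0) {γ : Fin n → ℤ}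
    (hγ : suppIn S γ) (hpos : 0 ≤ γ) : c.act x γ ≤ 0 := by
  rw [c.act_eq_sum]
  refine Finset.sum_nonpos fun i _ => ?_
  by_cases hi : i ∈ S
  · exact smul_nonpos_of_nonneg_of_nonpos (hpos i) (hx i hi)
  · rw [hγ i hi, zero_smul]

theorem suppIn_neg {γ : Fin n → ℤ} (hγ : suppIn S γ) : suppIn S (-γ) := fun i hi => by
  rw [Pi.neg_apply, hγ i hi, neg_zero]

theorem len_mul_of_sroot_nonneg {x : c.W} (hx : ∀ i ∈ S, 0 ≤ c.act x (c.sroot i)) {u : c.W}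
    (hu : u ∈ c.Wsub S) : c.len (x * u) = c.len x + c.len u := by
  refine wsub_induction_right (p := fun u => c.len (x * u) = c.len x + c.len u) (by simp) ?_ hu
  intro u hu i hi ih
  have hsupp := suppIn_act_sroot hu hi
  rcases c.act_sroot_nonneg_or_nonpos u i with hpos | hneg
  · have hx_pos := act_nonneg hx hsupp hpos
    rw [← c.act_mul] at hx_pos
    rw [← mul_assoc, len_mul_s_of_nonneg hx_pos, len_mul_s_of_nonneg hpos, ih, add_assoc]
  · have hx_neg := act_nonneg hx (suppIn_neg hsupp) (neg_nonneg.mpr hneg)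
    rw [act_neg, neg_nonneg, ← c.act_mul] at hx_neg
    have := len_mul_s_add_one_of_nonpos hx_neg
    have := len_mul_s_add_one_of_nonpos hneg
    rw [← mul_assoc]
    omega

theorem MinRep.sroot_nonneg {x : c.W} (hx : c.MinRep T S x) {i : Fin n} (hi : i ∈ S) :
    0 ≤ c.act x (c.sroot i) := by
  refine (c.act_sroot_nonneg_or_nonpos x i).resolve_right fun h => ?_
  have := len_mul_s_add_one_of_nonpos h
  have := hx.2 _ (s_mem_wsub hi)
  omega

theorem MinRep.len_mul {x u : c.W} (hx : c.MinRep T S x) (hu : u ∈ c.Wsub S) :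
    c.len (x * u) = c.len x + c.len u :=
  len_mul_of_sroot_nonneg (fun _ => hx.sroot_nonneg) hu

theorem minRep_of_sroot_nonneg {x : c.W} (hxT : x ∈ c.Wsub T)
    (hx : ∀ i ∈ S, 0 ≤ c.act x (c.sroot i)) : c.MinRep T S x :=
  ⟨hxT, fun _ hu => (len_mul_of_sroot_nonneg hx hu).symm ▸ Nat.le_add_right _ _⟩

theorem exists_minRep_mul (hST : S ⊆ T) {w : c.W} (hw : w ∈ c.Wsub T) :
    ∃ x u, c.MinRep T S x ∧ u ∈ c.Wsub S ∧ w = x * u := by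
  obtain ⟨u, hu, hmin⟩ := exists_minimalFor_of_wellFoundedLT (· ∈ c.Wsub S)
    (fun u => c.len (w * u)) ⟨1, one_mem _⟩
  refine ⟨w * u, u⁻¹, ⟨mul_mem hw (wsub_mono hST hu), fun v hv => ?_⟩, inv_mem hu, by simp⟩
  rw [mul_assoc]
  exact (le_total _ _).elim id (hmin (mul_mem hu hv))

theorem MinRep.eq_one {x : c.W} (hx : c.MinRep T S x) (hxS : x ∈ c.Wsub S) : x = 1 := by
  simpa [len_eq_zero] using hx.2 _ (inv_mem hxS)

theorem MinRep.eq_of_mul_eq {x x' u u' : c.W} (hx : c.MinRep T S x) (hx' : c.MinRep T S x')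
    (hu : u ∈ c.Wsub S) (hu' : u' ∈ c.Wsub S) (h : x * u = x' * u') : x = x' := by
  have hmem : u * u'⁻¹ ∈ c.Wsub S := mul_mem hu (inv_mem hu')
  have hx'_eq : x' = x * (u * u'⁻¹) := by rw [← mul_assoc, h, mul_inv_cancel_right]
  have hx_eq : x = x' * (u * u'⁻¹)⁻¹ := by rw [hx'_eq, mul_inv_cancel_right]
  have hle : c.len x' ≤ c.len x := by
    conv_rhs => rw [hx_eq]
    exact hx'.2 _ (inv_mem hmem)
  have hlen : c.len x' = c.len x + c.len (u * u'⁻¹) := by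
    conv_lhs => rw [hx'_eq]
    exact hx.len_mul hmem
  have huu' : u * u'⁻¹ = 1 := len_eq_zero.mp (by omega)
  rw [hx'_eq, huu', mul_one]

/-! ### Longest elements -/

theorem IsLongest.sroot_nonpos {w : c.W} (hw : c.IsLongest S w) {i : Fin n} (hi : i ∈ S) :
    c.act w (c.sroot i) ≤ 0 := by
  refine (c.act_sroot_nonneg_or_nonpos w i).resolve_left fun h => ?_
  have := len_mul_s_of_nonneg h
  have := hw.2 _ (mul_mem hw.1 (s_mem_wsub hi))
  omega

theorem IsLongest.len_mul_add_len {w : c.W} (hw : c.IsLongest S w) {u : c.W}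
    (hu : u ∈ c.Wsub S) : c.len (w * u) + c.len u = c.len w := by
  refine wsub_induction_right (p := fun u => c.len (w * u) + c.len u = c.len w) (by simp) ?_ hu
  intro u hu i hi ih
  have hsupp := suppIn_act_sroot hu hi
  have hw_neg : ∀ j ∈ S, c.act w (c.sroot j) ≤ 0 := fun _ => hw.sroot_nonpos
  rw [← mul_assoc]
  rcases c.act_sroot_nonneg_or_nonpos u i with hpos | hneg
  · have hwu_neg := act_nonpos hw_neg hsupp hpos
    rw [← c.act_mul] at hwu_neg
    have := len_mul_s_add_one_of_nonpos hwu_neg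
    have := len_mul_s_of_nonneg hpos
    omega
  · have hwu_pos := act_nonpos hw_neg (suppIn_neg hsupp) (neg_nonneg.mpr hneg)
    rw [act_neg, neg_nonpos, ← c.act_mul] at hwu_pos
    have := len_mul_s_of_nonneg hwu_pos
    have := len_mul_s_add_one_of_nonpos hneg
    omega

theorem IsLongest.mul_self {w : c.W} (hw : c.IsLongest S w) : w * w = 1 := by
  have := hw.len_mul_add_len hw.1
  exact len_eq_zero.mp (by omega)

theorem minRep_longest_mul_longest (hST : S ⊆ T) {wT wS : c.W} (hT : c.IsLongest T wT)
    (hS : c.IsLongest S wS) : c.MinRep T S (wT * wS) := by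
  have hle := wsub_mono (c := c) hST
  refine ⟨mul_mem hT.1 (hle hS.1), fun u hu => ?_⟩
  have h1 := hT.len_mul_add_len (hle hS.1)
  have h2 := hT.len_mul_add_len (hle (mul_mem hS.1 hu))
  have h3 := hS.2 _ (mul_mem hS.1 hu)
  rw [← mul_assoc] at h2
  omega

theorem MinRep.eq_longest_mul_longest (hST : S ⊆ T) {x wT wS : c.W} (hx : c.MinRep T S x)
    (hT : c.IsLongest T wT) (hS : c.IsLongest S wS) (hlen : c.len (wT * wS) ≤ c.len x) :
    wT * wS = x := by
  have hmem := wsub_mono (c := c) hST hS.1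
  have h1 := hT.len_mul_add_len (u := wT⁻¹ * (x * wS))
    (mul_mem (inv_mem hT.1) (mul_mem hx.1 hmem))
  have h2 := hT.len_mul_add_len hmem
  rw [mul_inv_cancel_left, hx.len_mul hS.1] at h1
  have hone : wT⁻¹ * (x * wS) = 1 := len_eq_zero.mp (by omega)
  rw [inv_mul_eq_one.mp hone, mul_assoc, hS.mul_self, mul_one]

end Parabolic

section Consecutive

variable {n : ℕ} (c : RootSystemData n)

/-! ### Products of consecutive simple reflections in type `A` -/

/-- The `0`-based indices `i` with `a ≤ i < b`, i.e. those of `α_{a+1}, …, α_b`; thus `Δ_m` is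
`rootIco n 0 m`. -/
def rootIco (n a b : ℕ) : Finset (Fin n) :=
  Finset.univ.filter fun i => a ≤ (i : ℕ) ∧ (i : ℕ) < b

/-- The product `s_{α_{a+1}} ⋯ s_{α_b}` of the consecutive simple reflections with `0`-based
indices in `[a, b)`; it is `1` if `b ≤ a`. -/
def sIco (a b : ℕ) : c.W := ((List.Ico a b).map c.sN).prod

@[simp]
theorem mem_rootIco {a b : ℕ} {i : Fin n} : i ∈ rootIco n a b ↔ a ≤ (i : ℕ) ∧ (i : ℕ) < b := by
  simp [rootIco]

theorem rootIco_subset {a b a' b' : ℕ} (ha : a' ≤ a) (hb : b ≤ b') :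
    rootIco n a b ⊆ rootIco n a' b' := fun i hi => by
  rw [mem_rootIco] at hi ⊢
  omega

theorem sN_of_lt {t : ℕ} (ht : t < n) : c.sN t = c.s ⟨t, ht⟩ := dif_pos ht

theorem sN_mul_sN (t : ℕ) : c.sN t * c.sN t = 1 := by
  rw [sN]
  split_ifs
  · exact c.s_mul_s _
  · exact one_mul 1

theorem sN_mem_wsub {a b t : ℕ} (ha : a ≤ t) (hb : t < b) : c.sN t ∈ c.Wsub (rootIco n a b) := by
  rw [sN]
  split_ifs
  · exact s_mem_wsub (mem_rootIco.mpr ⟨ha, hb⟩)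
  · exact one_mem _

theorem sIco_of_le {a b : ℕ} (h : b ≤ a) : c.sIco a b = 1 := by
  simp [sIco, List.Ico.eq_nil_of_le h]

theorem sIco_succ_right {a b : ℕ} (h : a ≤ b) : c.sIco a (b + 1) = c.sIco a b * c.sN b := by
  simp [sIco, List.Ico.succ_top h]

theorem sIco_eq_sN_mul {a b : ℕ} (h : a < b) : c.sIco a b = c.sN a * c.sIco (a + 1) b := by
  simp [sIco, List.Ico.eq_cons h]

theorem sIco_mul_sIco {a b m : ℕ} (hab : a ≤ b) (hbm : b ≤ m) :
    c.sIco a b * c.sIco b m = c.sIco a m := by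
  simp [sIco, ← List.Ico.append_consecutive hab hbm]

theorem sIco_mem_wsub (a b : ℕ) : c.sIco a b ∈ c.Wsub (rootIco n a b) := by
  refine Subgroup.list_prod_mem _ fun w hw => ?_
  obtain ⟨t, ht, rfl⟩ := List.mem_map.mp hw
  rw [List.Ico.mem] at ht
  exact c.sN_mem_wsub ht.1 ht.2

theorem len_sIco {a b : ℕ} (hb : b ≤ n) : c.len (c.sIco a b) = b - a := by
  rcases Nat.lt_or_ge b a with h | h
  · rw [c.sIco_of_le h.le, len_one, Nat.sub_eq_zero_of_le h.le]
  induction b, h using Nat.le_induction with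
  | base => rw [c.sIco_of_le le_rfl, len_one, Nat.sub_self]
  | succ b hab ih =>
    have hpos : 0 ≤ c.act (c.sIco a b) (c.sroot ⟨b, hb⟩) :=
      act_sroot_nonneg_of_notMem (c.sIco_mem_wsub a b) (by simp)
    rw [c.sIco_succ_right hab, c.sN_of_lt hb, len_mul_s_of_nonneg hpos, ih (by omega)]
    omega

variable {c}

theorem act_s_act_s_sroot {i j : Fin n} (hij : c.A i j = -1) (hji : c.A j i = -1) :
    c.act (c.s i) (c.act (c.s j) (c.sroot i)) = c.sroot j := by
  rw [act_s_sroot, hij, neg_one_smul, sub_neg_eq_add, act_add, act_s_sroot_self, act_s_sroot, hji]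
  simp

variable {r : ℕ}

theorem PathA.act_sroot_eq_self (hA : c.PathA r) {a b : ℕ} {i : Fin n} (hi : (i : ℕ) < r)
    (hb : b ≤ r) (h : (i : ℕ) + 1 < a ∨ b < i) {w : c.W} (hw : w ∈ c.Wsub (rootIco n a b)) :
    c.act w (c.sroot i) = c.sroot i := by
  refine RootSystemData.act_sroot_eq_self hw fun j hj => ?_
  rw [mem_rootIco] at hj
  exact (hA i j hi (by omega)).2 (by omega)

theorem PathA.act_s_act_s_sroot (hA : c.PathA r) {i j : Fin n} (hi : (i : ℕ) < r)
    (hj : (j : ℕ) < r) (h : (i : ℕ) + 1 = j ∨ (j : ℕ) + 1 = i) :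
    c.act (c.s i) (c.act (c.s j) (c.sroot i)) = c.sroot j :=
  RootSystemData.act_s_act_s_sroot ((hA i j hi hj).1 h) ((hA j i hj hi).1 h.symm)

theorem PathA.act_sIco (hA : c.PathA r) {a m : ℕ} {i j : Fin n} (hij : (i : ℕ) + 1 = j)
    (ha : a ≤ i) (hj : (j : ℕ) < m) (hm : m ≤ r) :
    c.act (c.sIco a m) (c.sroot i) = c.sroot j := by
  have hsplit : c.sIco a m = c.sIco a i * (c.s i * (c.s j * c.sIco (j + 1) m)) := by
    rw [← c.sIco_mul_sIco ha (by omega : (i : ℕ) ≤ m), c.sIco_eq_sN_mul (by omega : (i : ℕ) < m),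
      hij, c.sIco_eq_sN_mul hj, c.sN_of_lt i.2, c.sN_of_lt j.2]
  have hright : c.act (c.sIco (j + 1) m) (c.sroot i) = c.sroot i :=
    hA.act_sroot_eq_self (by omega) hm (by omega) (c.sIco_mem_wsub _ _)
  have hleft : c.act (c.sIco a i) (c.sroot j) = c.sroot j :=
    hA.act_sroot_eq_self (by omega) (b := i) (by omega) (by omega) (c.sIco_mem_wsub _ _)
  rw [hsplit, c.act_mul, c.act_mul, c.act_mul, hright,
    hA.act_s_act_s_sroot (by omega) (by omega) (Or.inl hij), hleft]

theorem PathA.mul_sN_comm (hA : c.PathA r) (hr : r ≤ n) {a b t : ℕ} (ht : t < r) (hb : b ≤ r)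
    (h : t + 1 < a ∨ b < t) {w : c.W} (hw : w ∈ c.Wsub (rootIco n a b)) :
    w * c.sN t = c.sN t * w := by
  rw [c.sN_of_lt (by omega)]
  exact mul_s_eq_s_mul_of_act_sroot (hA.act_sroot_eq_self ht hb h hw)

theorem PathA.act_sIco_act_sIco (hA : c.PathA r) (hr : r ≤ n) {i j : Fin n} (hij : i ≤ j)
    (hj : (j : ℕ) < r) :
    c.act (c.sIco (i + 1) (j + 1)) (c.act (c.sIco i j) (c.sroot j)) = c.sroot i := by
  obtain ⟨j, hjn⟩ := j
  induction j, (show (i : ℕ) ≤ j from hij) using Nat.le_induction with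
  | base => simp [sIco_of_le, c.act_one]
  | succ j h ih =>
    have hcomm : c.sIco i j * c.sN (j + 1) = c.sN (j + 1) * c.sIco i j :=
      hA.mul_sN_comm hr hj (b := j) (Nat.le_of_lt (Nat.lt_of_succ_lt hj)) (Or.inr j.lt_succ_self)
        (c.sIco_mem_wsub _ _)
    have hprod : c.sIco (i + 1) (j + 1 + 1) * c.sIco i (j + 1) =
        c.sIco (i + 1) (j + 1) * c.sIco i j * (c.sN (j + 1) * c.sN j) := by
      rw [c.sIco_succ_right (Nat.succ_le_succ h), c.sIco_succ_right h, mul_assoc,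
        ← mul_assoc (c.sN _), ← hcomm]
      simp only [mul_assoc]
    rw [← c.act_mul, hprod, c.act_mul, c.act_mul, c.act_mul, c.sN_of_lt hjn,
      c.sN_of_lt (Nat.lt_of_succ_lt hjn),
      hA.act_s_act_s_sroot hj (Nat.lt_of_succ_lt hj) (Or.inr rfl)]
    exact ih _ h (Nat.lt_of_succ_lt hj)

theorem PathA.sIco_mul_sN (hA : c.PathA r) (hr : r ≤ n) {a t m : ℕ} (ha : a ≤ t)
    (ht : t + 1 < m) (hm : m ≤ r) : c.sIco a m * c.sN t = c.sN (t + 1) * c.sIco a m := by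
  rw [c.sN_of_lt (by omega : t < n), c.sN_of_lt (by omega : t + 1 < n)]
  exact mul_s_eq_s_mul_of_act_sroot (hA.act_sIco rfl ha ht hm)

theorem PathA.sIco_mul_sIco_shift (hA : c.PathA r) (hr : r ≤ n) {a b q m : ℕ} (hab : a ≤ b)
    (hbq : b ≤ q) (hqm : q < m) (hm : m ≤ r) :
    c.sIco a m * c.sIco b q = c.sIco (b + 1) (q + 1) * c.sIco a m := by
  induction q, hbq using Nat.le_induction with
  | base => simp [sIco_of_le]
  | succ q hq ih =>
    rw [c.sIco_succ_right hq, ← mul_assoc, ih (by omega), mul_assoc,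
      hA.sIco_mul_sN hr (hab.trans hq) hqm hm, c.sIco_succ_right (by omega : b + 1 ≤ q + 1),
      mul_assoc]

theorem PathA.exists_sIco_mul (hA : c.PathA r) (hr : r ≤ n) {m : ℕ} (hm : m < r) {w : c.W}
    (hw : w ∈ c.Wsub (rootIco n 0 (m + 1))) :
    ∃ j y, j ≤ m + 1 ∧ y ∈ c.Wsub (rootIco n 0 m) ∧ w = c.sIco j (m + 1) * y := by
  refine wsub_induction_left (p := fun w => ∃ j y, j ≤ m + 1 ∧ y ∈ c.Wsub (rootIco n 0 m) ∧
    w = c.sIco j (m + 1) * y) ⟨m + 1, 1, le_rfl, one_mem _, by simp [sIco_of_le]⟩ ?_ hw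
  rintro ⟨t, htn⟩ ht _ ⟨j, y, hj, hy, rfl⟩
  have htm : t < m + 1 := (mem_rootIco.mp ht).2
  rw [← c.sN_of_lt htn]
  obtain h | rfl | rfl | h : t + 1 < j ∨ j = t + 1 ∨ t = j ∨ j < t := by omega
  · refine ⟨j, c.sN t * y, hj, mul_mem (c.sN_mem_wsub t.zero_le (by omega)) hy, ?_⟩
    rw [← mul_assoc, ← mul_assoc,
      hA.mul_sN_comm hr (by omega) hm (Or.inl h) (c.sIco_mem_wsub _ _)]
  · exact ⟨t, y, by omega, hy, by rw [c.sIco_eq_sN_mul htm, mul_assoc]⟩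
  · refine ⟨t + 1, y, htm, hy, ?_⟩
    rw [c.sIco_eq_sN_mul htm, mul_assoc, ← mul_assoc, sN_mul_sN, one_mul]
  · obtain ⟨t, rfl⟩ := Nat.exists_eq_add_of_lt (Nat.zero_lt_of_lt h)
    rw [Nat.zero_add] at *
    refine ⟨j, c.sN t * y, hj, mul_mem (c.sN_mem_wsub t.zero_le (by omega)) hy, ?_⟩
    rw [← mul_assoc, ← hA.sIco_mul_sN hr (by omega) htm hm, mul_assoc]

theorem PathA.minRep_sIco (hA : c.PathA r) (hr : r ≤ n) {j m : ℕ} (hm : m < r) :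
    c.MinRep (rootIco n 0 (m + 1)) (rootIco n 0 m) (c.sIco j (m + 1)) := by
  refine minRep_of_sroot_nonneg
    (wsub_mono (rootIco_subset j.zero_le le_rfl) (c.sIco_mem_wsub _ _)) fun i hi => ?_
  have him : (i : ℕ) < m := (mem_rootIco.mp hi).2
  rcases Nat.lt_or_ge i j with h | h
  · exact act_sroot_nonneg_of_notMem (c.sIco_mem_wsub j (m + 1)) (by simp [h])
  · rw [hA.act_sIco (j := ⟨i + 1, by omega⟩) rfl h (Nat.succ_lt_succ him) hm]
    exact c.sroot_nonneg _

theorem MinRep.eq_sIco (hA : c.PathA r) (hr : r ≤ n) {m : ℕ} (hm : m < r) {x : c.W}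
    (hx : c.MinRep (rootIco n 0 (m + 1)) (rootIco n 0 m) x) :
    c.len x ≤ m + 1 ∧ x = c.sIco (m + 1 - c.len x) (m + 1) := by
  obtain ⟨j, y, hj, hy, hxy⟩ := hA.exists_sIco_mul hr hm hx.1
  obtain rfl : x = c.sIco j (m + 1) :=
    hx.eq_of_mul_eq (hA.minRep_sIco hr hm) (one_mem _) hy (by rw [mul_one, hxy])
  rw [c.len_sIco (by omega), Nat.sub_sub_self hj]
  exact ⟨Nat.sub_le _ _, rfl⟩

end Consecutive

section DescendingProduct

/-! ### Chains of minimal coset representatives -/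

/-- The product `f (m - 1) * ⋯ * f 1 * f 0` with descending indices. -/
def descProd {M : Type*} [Monoid M] (f : ℕ → M) : ℕ → M
  | 0 => 1
  | m + 1 => f m * descProd f m

variable {M : Type*} [Monoid M]

theorem prod_reverse_ofFn (f : ℕ → M) (m : ℕ) :
    (List.ofFn fun i : Fin m => f i).reverse.prod = descProd f m := by
  induction m with
  | zero => simp [descProd]
  | succ m ih =>
    rw [List.ofFn_succ_last]
    simp [descProd, ← ih]

theorem descProd_congr {f g : ℕ → M} {m : ℕ} (h : ∀ i < m, f i = g i) :
    descProd f m = descProd g m := by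
  induction m with
  | zero => rfl
  | succ m ih => rw [descProd, descProd, h m m.lt_succ_self, ih fun i hi => h i (by omega)]

theorem descProd_add (f : ℕ → M) (a d : ℕ) :
    descProd f (a + d) = descProd (fun i => f (a + i)) d * descProd f a := by
  induction d with
  | zero => simp [descProd]
  | succ d ih => rw [← add_assoc, descProd, ih, descProd, mul_assoc]

end DescendingProduct

section Chain

variable {n : ℕ} {c : RootSystemData n}

theorem len_descProd_le (f : ℕ → c.W) (m : ℕ) :
    c.len (descProd f m) ≤ ∑ i ∈ Finset.range m, c.len (f i) := by
  induction m with
  | zero => simp [descProd]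
  | succ m ih =>
    rw [Finset.sum_range_succ_comm]
    exact (c.len_mul_le _ _).trans (Nat.add_le_add_left ih _)

/-- The factors `f 0, …, f (m - 1)` satisfy `f i ∈ W_{Δ_{i+1}}^{Δ_i}`; so `f i` is the factor
`v_{i+1}` of the decomposition of `descProd f m ∈ W_{Δ_m}`. -/
def MinRepChain (c : RootSystemData n) (m : ℕ) (f : ℕ → c.W) : Prop :=
  ∀ i < m, c.MinRep (rootIco n 0 (i + 1)) (rootIco n 0 i) (f i)

variable {f g : ℕ → c.W} {m m' : ℕ} {S : Finset (Fin n)}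

theorem MinRepChain.mono (hf : MinRepChain c m f) (h : m' ≤ m) : MinRepChain c m' f :=
  fun i hi => hf i (hi.trans_le h)

theorem MinRepChain.descProd_mem_wsub (hf : MinRepChain c m f) :
    descProd f m ∈ c.Wsub (rootIco n 0 m) := by
  induction m with
  | zero => exact one_mem _
  | succ m ih =>
    exact mul_mem (hf m m.lt_succ_self).1
      (wsub_mono (rootIco_subset le_rfl m.le_succ) (ih (hf.mono m.le_succ)))

theorem MinRepChain.len_descProd (hf : MinRepChain c m f) :
    c.len (descProd f m) = ∑ i ∈ Finset.range m, c.len (f i) := by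
  induction m with
  | zero => simp [descProd]
  | succ m ih =>
    have hf' := hf.mono m.le_succ
    rw [descProd, (hf m m.lt_succ_self).len_mul hf'.descProd_mem_wsub, ih hf',
      Finset.sum_range_succ, add_comm]

theorem exists_minRepChain {w : c.W} (hw : w ∈ c.Wsub (rootIco n 0 m)) :
    ∃ f, MinRepChain c m f ∧ w = descProd f m := by
  induction m generalizing w with
  | zero =>
    have hempty : rootIco n 0 0 = ∅ := by simp [rootIco]
    rw [hempty, wsub_empty, Subgroup.mem_bot] at hw
    exact ⟨fun _ => 1, fun i hi => absurd hi i.not_lt_zero, hw⟩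
  | succ m ih =>
    obtain ⟨x, u, hx, hu, rfl⟩ := exists_minRep_mul (rootIco_subset le_rfl m.le_succ) hw
    obtain ⟨f, hf, rfl⟩ := ih hu
    have hupdate : ∀ i < m, Function.update f m x i = f i := fun i hi =>
      Function.update_of_ne hi.ne _ _
    refine ⟨Function.update f m x, fun i hi => ?_, ?_⟩
    · rcases Nat.lt_succ_iff_lt_or_eq.mp hi with hi | rfl
      · rw [hupdate i hi]
        exact hf i hi
      · rwa [Function.update_self]
    · rw [descProd, Function.update_self, descProd_congr hupdate]

theorem MinRepChain.eq_of_descProd_eq (hf : MinRepChain c m f) (hg : MinRepChain c m g)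
    (h : descProd f m = descProd g m) : ∀ i < m, f i = g i := by
  induction m with
  | zero => exact fun i hi => absurd hi i.not_lt_zero
  | succ m ih =>
    have hf' := hf.mono m.le_succ
    have hg' := hg.mono m.le_succ
    have hlast : f m = g m := (hf m m.lt_succ_self).eq_of_mul_eq (hg m m.lt_succ_self)
      hf'.descProd_mem_wsub hg'.descProd_mem_wsub h
    rw [descProd, descProd, hlast, mul_right_inj] at h
    intro i hi
    rcases Nat.lt_succ_iff_lt_or_eq.mp hi with hi | rfl
    · exact ih hf' hg' h i hi
    · exact hlast

theorem MinRepChain.minRep_of_le (hf : MinRepChain c m f)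
    (hx : c.MinRep (rootIco n 0 m) S (descProd f m)) (h : m' ≤ m) :
    c.MinRep (rootIco n 0 m') S (descProd f m') := by
  have hf' := hf.mono h
  refine ⟨hf'.descProd_mem_wsub, fun u hu => ?_⟩
  obtain ⟨d, rfl⟩ := Nat.exists_eq_add_of_le h
  have hmin := hx.2 u hu
  have hle := len_descProd_le (fun i => f (m' + i)) d
  have hmul := c.len_mul_le (descProd (fun i => f (m' + i)) d) (descProd f m' * u)
  rw [hf.len_descProd, Finset.sum_range_add, ← hf'.len_descProd, descProd_add, mul_assoc] at hmin
  omega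

theorem MinRepChain.eq_one_of_rootIco_subset (hf : MinRepChain c m f)
    (hx : c.MinRep (rootIco n 0 m) S (descProd f m)) {k i : ℕ} (hk : k ≤ m)
    (hS : rootIco n 0 k ⊆ S) (hi : i < k) : f i = 1 := by
  have hf' := hf.mono hk
  have hone : descProd f k = 1 :=
    (hf.minRep_of_le hx hk).eq_one (wsub_mono hS hf'.descProd_mem_wsub)
  have hsum := hf'.len_descProd
  rw [hone, len_one] at hsum
  exact len_eq_zero.mp (Finset.sum_eq_zero_iff.mp hsum.symm i (Finset.mem_range.mpr hi))

variable {r : ℕ}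

theorem PathA.sIco_mul_sIco_mul_mul_sN (hA : c.PathA r) (hr : r ≤ n) {a b p : ℕ} (hab : a ≤ b)
    (hbp : b ≤ p + 1) (hp : p + 1 < r) {w : c.W} (hw : w ∈ c.Wsub (rootIco n 0 p)) :
    c.sIco a (p + 2) * (c.sIco b (p + 1) * w) * c.sN (p + 1) =
      c.sIco (b + 1) (p + 2) * (c.sIco a (p + 1) * w) := by
  rw [← mul_assoc, hA.sIco_mul_sIco_shift hr hab hbp (by omega) hp, mul_assoc, mul_assoc,
    hA.mul_sN_comm hr hp (by omega) (Or.inr p.lt_succ_self) hw,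
    c.sIco_succ_right (by omega : a ≤ p + 1), mul_assoc (c.sIco a _), ← mul_assoc (c.sN _) (c.sN _),
    sN_mul_sN, one_mul]

-- With `f (p + 1) = sIco a (p + 2)` and `f p = sIco b (p + 1)`, right multiplication by
-- `sN (p + 1)` turns `f (p + 1) * f p` into `sIco (b + 1) (p + 2) * sIco a (p + 1)` as soon as
-- `a ≤ b`, that is, `ℓ(f p) < ℓ(f (p + 1))`. This has one letter fewer, contradicting minimality.
theorem MinRepChain.len_succ_le (hf : MinRepChain c r f) (hA : c.PathA r) (hr : r ≤ n)
    (hx : c.MinRep (rootIco n 0 r) S (descProd f r)) {p : ℕ} (hp : p + 1 < r)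
    (hS : c.sN (p + 1) ∈ c.Wsub S) : c.len (f (p + 1)) ≤ c.len (f p) := by
  by_contra! hlt
  obtain ⟨hb, hfp⟩ := (hf p (by omega)).eq_sIco hA hr (by omega)
  obtain ⟨ha, hfp1⟩ := (hf (p + 1) hp).eq_sIco hA hr hp
  set a := p + 2 - c.len (f (p + 1))
  set b := p + 1 - c.len (f p)
  have hfp_mem := (hf.mono (by omega : p ≤ r)).descProd_mem_wsub
  have hlen : c.len (descProd f (p + 2)) =
      c.len (f (p + 1)) + (c.len (f p) + c.len (descProd f p)) := by
    have h1 := (hf.mono (by omega : p + 1 ≤ r)).descProd_mem_wsub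
    rw [descProd, (hf (p + 1) hp).len_mul h1, descProd, (hf p (by omega)).len_mul hfp_mem]
  have hmul : descProd f (p + 2) * c.sN (p + 1) =
      c.sIco (b + 1) (p + 2) * (c.sIco a (p + 1) * descProd f p) := by
    rw [descProd, descProd, hfp, hfp1]
    exact hA.sIco_mul_sIco_mul_mul_sN hr (by omega) (by omega) hp hfp_mem
  have hmin := (hf.minRep_of_le hx hp).2 _ hS
  have hle1 := c.len_mul_le (c.sIco (b + 1) (p + 2)) (c.sIco a (p + 1) * descProd f p)
  have hle2 := c.len_mul_le (c.sIco a (p + 1)) (descProd f p)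
  rw [c.len_sIco (by omega)] at hle1 hle2
  rw [hmul, hlen] at hmin
  omega

theorem MinRepChain.len_antitone (hf : MinRepChain c r f) (hA : c.PathA r) (hr : r ≤ n)
    (hx : c.MinRep (rootIco n 0 r) S (descProd f r)) {k p q : ℕ} (hS : rootIco n (k + 1) r ⊆ S)
    (hkp : k ≤ p) (hpq : p ≤ q) (hq : q < r) : c.len (f q) ≤ c.len (f p) := by
  induction q, hpq using Nat.le_induction with
  | base => exact le_rfl
  | succ q h ih =>
    have hmem : c.sN (q + 1) ∈ c.Wsub S := wsub_mono hS (c.sN_mem_wsub (by omega) hq)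
    exact (hf.len_succ_le hA hr hx hq hmem).trans (ih (by omega))

theorem MinRep.len_le_mul (hA : c.PathA r) (hr : r ≤ n) {k : ℕ} (hk : k < r)
    (hS : rootIco n 0 k ⊆ S) (hS' : rootIco n (k + 1) r ⊆ S) {x : c.W}
    (hx : c.MinRep (rootIco n 0 r) S x) : c.len x ≤ (r - k) * (k + 1) := by
  obtain ⟨f, hf, rfl⟩ := exists_minRepChain hx.1
  obtain ⟨d, rfl⟩ := Nat.exists_eq_add_of_lt hk
  have hlow : ∑ i ∈ Finset.range k, c.len (f i) = 0 := Finset.sum_eq_zero fun i hi => by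
    rw [hf.eq_one_of_rootIco_subset hx hk.le hS (Finset.mem_range.mp hi), len_one]
  have hhigh : ∑ i ∈ Finset.range (d + 1), c.len (f (k + i)) ≤ (d + 1) * (k + 1) := by
    refine (Finset.sum_le_card_nsmul _ _ (k + 1) fun i hi => ?_).trans_eq (by simp)
    rw [Finset.mem_range] at hi
    exact (hf.len_antitone hA hr hx hS' le_rfl (Nat.le_add_right k i) (by omega)).trans
      ((hf k hk).eq_sIco hA hr hk).1
  rw [hf.len_descProd, add_assoc, Finset.sum_range_add, hlow, zero_add, Nat.add_sub_cancel_left]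
  exact hhigh

end Chain

section Rectangle

variable {n : ℕ} (c : RootSystemData n)

/-! ### The longest minimal representative -/

/-- The chain of factors of `u_{k+1}^{(r)} ⋯ u_{k+1}^{(k+1)}` for the `0`-based omitted index `k`:
trivial below `k`, and `u_{k+1}^{(i+1)}` for `i ≥ k`. -/
def rectChain (k i : ℕ) : c.W := if i < k then 1 else c.sIco (i - k) (i + 1)

theorem rectChain_of_lt {k i : ℕ} (h : i < k) : c.rectChain k i = 1 := if_pos h

theorem rectChain_of_le {k i : ℕ} (h : k ≤ i) : c.rectChain k i = c.sIco (i - k) (i + 1) :=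
  if_neg h.not_gt

theorem len_rectChain {k i : ℕ} (hi : i < n) :
    c.len (c.rectChain k i) = if k ≤ i then k + 1 else 0 := by
  split_ifs with h
  · rw [rectChain_of_le c h, c.len_sIco hi]
    omega
  · rw [rectChain_of_lt c (not_le.mp h), len_one]

theorem uElt_eq_sIco (i m : ℕ) : c.uElt i m = c.sIco (m - i) m := by
  rw [uElt, uu, sIco, List.Ico, Nat.add_sub_add_right, add_comm (m - i) 1, ← List.map_add_range',
    List.map_map]
  congr 2
  funext t
  simp

theorem descProd_rectChain_self (k : ℕ) : descProd (c.rectChain k) k = 1 := by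
  have hone (m : ℕ) : descProd (fun _ => (1 : c.W)) m = 1 := by
    induction m with
    | zero => rfl
    | succ m ih => rw [descProd, ih, one_mul]
  rw [descProd_congr fun i hi => c.rectChain_of_lt hi, hone]

theorem descProd_rectChain (k d : ℕ) :
    descProd (c.rectChain k) (k + d) = descProd (fun t => c.uElt (k + 1) (k + 1 + t)) d := by
  rw [descProd_add, descProd_rectChain_self, mul_one]
  refine descProd_congr fun t _ => ?_
  rw [uElt_eq_sIco, rectChain_of_le _ (Nat.le_add_right k t)]
  congr 1 <;> omega

theorem descProd_rectChain_succ (k d : ℕ) :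
    descProd (c.rectChain k) (k + (d + 1)) =
      c.sIco d (k + d + 1) * descProd (c.rectChain k) (k + d) := by
  rw [← add_assoc, descProd, rectChain_of_le _ (Nat.le_add_right k d), Nat.add_sub_cancel_left]

variable {c} {r : ℕ}

theorem PathA.minRepChain_rectChain (hA : c.PathA r) (hr : r ≤ n) (k : ℕ) :
    MinRepChain c r (c.rectChain k) := by
  intro i hi
  rcases Nat.lt_or_ge i k with h | h
  · simpa [rectChain_of_lt c h, sIco_of_le] using hA.minRep_sIco hr (j := i + 1) hi
  · rw [rectChain_of_le c h]
    exact hA.minRep_sIco hr hi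

theorem PathA.len_descProd_rectChain (hA : c.PathA r) (hr : r ≤ n) {k : ℕ} (hk : k ≤ r) :
    c.len (descProd (c.rectChain k) r) = (r - k) * (k + 1) := by
  obtain ⟨d, rfl⟩ := Nat.exists_eq_add_of_le hk
  have hlow : ∑ i ∈ Finset.range k, c.len (c.rectChain k i) = 0 := Finset.sum_eq_zero fun i hi => by
    rw [rectChain_of_lt c (Finset.mem_range.mp hi), len_one]
  have hhigh : ∑ i ∈ Finset.range d, c.len (c.rectChain k (k + i)) = d * (k + 1) := by
    refine (Finset.sum_const_nat fun i hi => ?_).trans (by rw [Finset.card_range])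
    rw [Finset.mem_range] at hi
    rw [c.len_rectChain (by omega), if_pos (Nat.le_add_right k i)]
  rw [(hA.minRepChain_rectChain hr k).len_descProd, Finset.sum_range_add, hlow, hhigh, zero_add,
    Nat.add_sub_cancel_left]

theorem PathA.act_descProd_rectChain_of_lt (hA : c.PathA r) {k d : ℕ} (hd : k + d ≤ r) {i j : Fin n}
    (hi : (i : ℕ) < k) (hij : (j : ℕ) = i + d) :
    c.act (descProd (c.rectChain k) (k + d)) (c.sroot i) = c.sroot j := by
  induction d generalizing j with
  | zero => rw [add_zero, descProd_rectChain_self, c.act_one, Fin.ext hij]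
  | succ d ih =>
    rw [descProd_rectChain_succ, c.act_mul, ih (by omega) (j := ⟨i + d, by omega⟩) rfl]
    exact hA.act_sIco hij.symm (Nat.le_add_left _ _) (by omega) hd

theorem PathA.act_descProd_rectChain_of_gt (hA : c.PathA r) (hr : r ≤ n) {k d : ℕ} (hd : k + d ≤ r)
    {i j : Fin n} (hij : (j : ℕ) = k + 1 + i) (hi : (i : ℕ) + 2 ≤ d) :
    c.act (descProd (c.rectChain k) (k + d)) (c.sroot j) = c.sroot i := by
  induction d, hi using Nat.le_induction with
  | base =>
    have hfix : c.act (descProd (c.rectChain k) (k + i)) (c.sroot j) = c.sroot j :=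
      hA.act_sroot_eq_self (a := 0) (by omega) (by omega) (by omega)
        ((hA.minRepChain_rectChain hr k).mono (by omega)).descProd_mem_wsub
    have hj : k + i + 1 = j := by omega
    rw [descProd_rectChain_succ, descProd_rectChain_succ, c.act_mul, c.act_mul, hfix, hj,
      ← add_assoc, hj]
    exact hA.act_sIco_act_sIco hr (Fin.le_def.mpr (by omega)) (by omega)
  | succ d hi ih =>
    rw [descProd_rectChain_succ, c.act_mul, ih (by omega)]
    exact hA.act_sroot_eq_self (by omega) hd (Or.inl (by omega)) (c.sIco_mem_wsub _ _)

theorem PathA.minRep_descProd_rectChain (hA : c.PathA r) (hr : r ≤ n) {k : Fin n}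
    (hk : (k : ℕ) < r) :
    c.MinRep (rootIco n 0 r) ((rootIco n 0 r).erase k) (descProd (c.rectChain k) r) := by
  refine minRep_of_sroot_nonneg (hA.minRepChain_rectChain hr k).descProd_mem_wsub fun i hi => ?_
  obtain ⟨hik, hir⟩ := Finset.mem_erase.mp hi
  have hir : (i : ℕ) < r := (mem_rootIco.mp hir).2
  obtain ⟨d, rfl⟩ := Nat.exists_eq_add_of_le hk.le
  rcases Nat.lt_or_gt_of_ne (Fin.val_ne_of_ne hik) with h | h
  · rw [hA.act_descProd_rectChain_of_lt le_rfl h (j := ⟨i + d, by omega⟩) rfl]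
    exact c.sroot_nonneg _
  · obtain ⟨e, he⟩ := Nat.exists_eq_add_of_lt h
    rw [hA.act_descProd_rectChain_of_gt hr le_rfl (i := ⟨e, by omega⟩) (by simp; omega)
      (by simp; omega)]
    exact c.sroot_nonneg _

theorem rootIco_subset_erase_of_le {a b : ℕ} {k : Fin n} (hb : b ≤ k) (hk : (k : ℕ) < r) :
    rootIco n a b ⊆ (rootIco n 0 r).erase k := fun i hi => by
  rw [mem_rootIco] at hi
  rw [Finset.mem_erase, mem_rootIco, ne_eq, Fin.ext_iff]
  omega

theorem rootIco_subset_erase_of_lt {a : ℕ} {k : Fin n} (ha : (k : ℕ) < a) :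
    rootIco n a r ⊆ (rootIco n 0 r).erase k := fun i hi => by
  rw [mem_rootIco] at hi
  rw [Finset.mem_erase, mem_rootIco, ne_eq, Fin.ext_iff]
  omega

theorem PathA.longest_mul_longest_eq (hA : c.PathA r) (hr : r ≤ n) {k : Fin n} (hk : (k : ℕ) < r)
    {wP wT : c.W} (hP : c.IsLongest (rootIco n 0 r) wP)
    (hT : c.IsLongest ((rootIco n 0 r).erase k) wT) :
    wP * wT = descProd (c.rectChain k) r := by
  have hST := Finset.erase_subset k (rootIco n 0 r)
  refine (hA.minRep_descProd_rectChain hr hk).eq_longest_mul_longest hST hP hT ?_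
  rw [hA.len_descProd_rectChain hr hk.le]
  exact (minRep_longest_mul_longest hST hP hT).len_le_mul hA hr hk
    (rootIco_subset_erase_of_le le_rfl hk) (rootIco_subset_erase_of_lt (k : ℕ).lt_succ_self)

end Rectangle

section Decomposition

variable {n r : ℕ} {c : RootSystemData n}

/-! ### Decompositions of elements of `W_{Δ_P}` -/

theorem deltaSet_of_le {j : ℕ} (h : j ≤ r) : deltaSet n r j = rootIco n 0 j := by
  simp [deltaSet, rootIco, show j ≠ r + 1 by omega]

-- The top factor `v_{r+1}` lies in `W_{Δ_r}` as `x` and all the other factors do, so it is trivial.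
theorem IsDecomp.exists_minRepChain {x : c.W} {v : Fin (r + 1) → c.W} (hv : c.IsDecomp r x v)
    (hx : x ∈ c.Wsub (rootIco n 0 r)) :
    ∃ f, MinRepChain c r f ∧ x = descProd f r ∧ f r = 1 ∧ ∀ p : Fin (r + 1), v p = f p := by
  obtain ⟨f, rfl⟩ : ∃ f : ℕ → c.W, v = fun p : Fin (r + 1) => f p :=
    ⟨fun i => if h : i < r + 1 then v ⟨i, h⟩ else 1, funext fun p => by simp [p.is_le]⟩
  obtain ⟨hmin, hprod⟩ := hv
  rw [prod_reverse_ofFn, descProd] at hprod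
  have hf : MinRepChain c r f := fun i hi => by
    simpa only [deltaSet_of_le hi, deltaSet_of_le hi.le] using hmin ⟨i, by omega⟩
  have hlast : f r = 1 := by
    have hfr : c.MinRep (deltaSet n r (r + 1)) (deltaSet n r r) (f r) := hmin (Fin.last r)
    rw [deltaSet_of_le le_rfl] at hfr
    refine hfr.eq_one ?_
    rw [eq_mul_inv_of_mul_eq hprod.symm]
    exact mul_mem hx (inv_mem hf.descProd_mem_wsub)
  exact ⟨f, hf, by rw [hprod, hlast, one_mul], hlast, fun _ => rfl⟩

theorem PathA.len_of_isDecomp_rectChain (hA : c.PathA r) (hr : r ≤ n) {k : ℕ}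
    {v : Fin (r + 1) → c.W} (hv : c.IsDecomp r (descProd (c.rectChain k) r) v) (p : Fin (r + 1)) :
    c.len (v p) = if k ≤ p ∧ (p : ℕ) < r then k + 1 else 0 := by
  have hrect := hA.minRepChain_rectChain hr k
  obtain ⟨f, hf, hprod, hlast, hvf⟩ := hv.exists_minRepChain hrect.descProd_mem_wsub
  rw [hvf]
  rcases Nat.lt_succ_iff_lt_or_eq.mp p.2 with hp | hp
  · rw [hf.eq_of_descProd_eq hrect hprod.symm p hp, c.len_rectChain (by omega)]
    simp only [hp, and_true]
  · simp [hp, hlast]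

theorem PathA.len_of_isDecomp_minRep (hA : c.PathA r) (hr : r ≤ n) {k : Fin n} (hk : (k : ℕ) < r)
    {x : c.W} (hx : c.MinRep (rootIco n 0 r) ((rootIco n 0 r).erase k) x)
    {v : Fin (r + 1) → c.W} (hv : c.IsDecomp r x v) :
    (∀ p : Fin (r + 1), ((p : ℕ) < k ∨ (p : ℕ) = r) → c.len (v p) = 0) ∧
      c.len (v ⟨k, hk.trans r.lt_succ_self⟩) ≤ k + 1 ∧
      ∀ p q : Fin (r + 1), (k : ℕ) ≤ p → (p : ℕ) ≤ q → (q : ℕ) < r → c.len (v q) ≤ c.len (v p) := by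
  obtain ⟨f, hf, rfl, hlast, hvf⟩ := hv.exists_minRepChain hx.1
  simp only [hvf, len_eq_zero]
  refine ⟨fun p hp => hp.elim (fun h => ?_) fun h => by rwa [h],
    ((hf k hk).eq_sIco hA hr hk).1, fun p q => ?_⟩
  · exact hf.eq_one_of_rootIco_subset hx hk.le (rootIco_subset_erase_of_le le_rfl hk) h
  · exact hf.len_antitone hA hr hx (rootIco_subset_erase_of_lt (k : ℕ).lt_succ_self)

end Decomposition

end RootSystemData

/-- Let `Δ̃ = Δ_P \ {α_k}` for `1 ≤ k ≤ r`, with `Δ_P` of type `A_r`.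
(a) `ω_P ω_{Δ̃} = u_k^{(r)} u_k^{(r-1)} ⋯ u_k^{(k)}` and
`gr(ω_P ω_{Δ̃}) = Σ_{p=k}^r k·e_p`.
(b) For every `v ∈ W_{Δ_P}^{Δ̃}`, writing `gr(v) = Σ_p j_p e_p`, one has `j_p = 0`
for `p < k` and for `p = r+1`, `j_k ≤ k`, and `j_k ≥ j_{k+1} ≥ ⋯ ≥ j_r`. -/
theorem longest_parabolic_quotient_A_type {n : ℕ} (c : RootSystemData n)
    (r : ℕ) (hr1 : 1 ≤ r) (hrn : r < n) (hA : c.PathA r)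
    (k : ℕ) (hk1 : 1 ≤ k) (hkr : k ≤ r) :
    (∀ wP wT : c.W, c.IsLongest (deltaSet n r r) wP →
      c.IsLongest ((deltaSet n r r).erase ⟨k - 1, by omega⟩) wT →
      wP * wT =
        (List.ofFn fun t : Fin (r - k + 1) => c.uElt k (k + (t : ℕ))).reverse.prod ∧
      ∀ v : Fin (r + 1) → c.W, c.IsDecomp r (wP * wT) v →
        ∀ p : Fin (r + 1),
          c.len (v p) = if k ≤ (p : ℕ) + 1 ∧ (p : ℕ) + 1 ≤ r then k else 0) ∧
    (∀ x : c.W,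
      c.MinRep (deltaSet n r r) ((deltaSet n r r).erase ⟨k - 1, by omega⟩) x →
      ∀ v : Fin (r + 1) → c.W, c.IsDecomp r x v →
        (∀ p : Fin (r + 1), ((p : ℕ) + 1 < k ∨ (p : ℕ) = r) → c.len (v p) = 0) ∧
        c.len (v ⟨k - 1, by omega⟩) ≤ k ∧
        (∀ p q : Fin (r + 1), k ≤ (p : ℕ) + 1 → (p : ℕ) ≤ (q : ℕ) → (q : ℕ) < r →
          c.len (v q) ≤ c.len (v p))) := by
  obtain ⟨k, rfl⟩ := Nat.exists_eq_add_of_le' hk1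
  simp only [Nat.add_sub_cancel, RootSystemData.deltaSet_of_le le_rfl, Nat.succ_le_iff,
    Nat.lt_succ_iff]
  refine ⟨fun wP wT hP hT => ?_, fun x hx v hv => ?_⟩
  · have heq := hA.longest_mul_longest_eq hrn.le (k := ⟨k, by omega⟩) hkr hP hT
    refine ⟨?_, fun v hv => ?_⟩
    · rw [heq, RootSystemData.prod_reverse_ofFn (fun t => c.uElt (k + 1) (k + 1 + t)),
        ← c.descProd_rectChain, show k + (r - (k + 1) + 1) = r by omega]
    · rw [heq] at hv
      exact hA.len_of_isDecomp_rectChain hrn.le hv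
  · exact hA.len_of_isDecomp_minRep hrn.le (k := ⟨k, by omega⟩) hkr hx hv
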